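/- Let (X,f) be a topological dynamical system, Q a finite measurable partition of X, c ∈ (0,1), and μ an f-invariant ergodic Borel probability measure. Then h_μ(f,Q) = limsup_{n→∞} (1/n) log N_μ(n,c), where N_μ(n,c) denotes the minimum number of elements of the partition Q^{(n)} = ⋁_{i=0}^{n−1} f^{−i}Q needed to cover a set of μ-measure at least c. -/

import Mathlib

open Filter MeasureTheory Set Topology
open scoped ENNReal

/-- A *mistake function* `g : ℕ × (0,∞) → ℕ`: nondecreasing in `n` and sublinear in `n`
for every scale `ε > 0`. -/
structure IsMistakeFunction (g : ℕ → ℝ → ℕ) : Prop where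
  mono : ∀ ε : ℝ, 0 < ε → ∀ n : ℕ, g n ε ≤ g (n + 1) ε
  sublinear : ∀ ε : ℝ, 0 < ε → Tendsto (fun n : ℕ => (g n ε : ℝ) / n) atTop (nhds 0)

/-- The mistake dynamical ball `B_n(g; x, ε)`. -/
def mistakeBall {X : Type*} [PseudoMetricSpace X] (f : X → X) (g : ℕ → ℝ → ℕ)
    (n : ℕ) (x : X) (ε : ℝ) : Set X :=
  {y | ∃ Λ : Finset ℕ, Λ ⊆ Finset.range n ∧ n - g n ε ≤ Λ.card ∧
    ∀ i ∈ Λ, dist (f^[i] y) (f^[i] x) < ε}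

/-- First return time `R_n(g; x, ε)` to the mistake dynamical ball. -/
noncomputable def mistakeReturn {X : Type*} [PseudoMetricSpace X] (f : X → X)
    (g : ℕ → ℝ → ℕ) (n : ℕ) (x : X) (ε : ℝ) : ℕ :=
  sInf {k : ℕ | 1 ≤ k ∧ f^[k] x ∈ mistakeBall f g n x ε}

/-- Minimal return time `S_n(g; x, ε)` of the mistake dynamical ball to itself. -/
noncomputable def mistakeMinReturn {X : Type*} [PseudoMetricSpace X] (f : X → X)
    (g : ℕ → ℝ → ℕ) (n : ℕ) (x : X) (ε : ℝ) : ℕ :=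
  sInf {k : ℕ | 1 ≤ k ∧
    (f^[k] ⁻¹' (mistakeBall f g n x ε) ∩ mistakeBall f g n x ε).Nonempty}

/-- `g`-almost specification at scale `ε`. -/
def AlmostSpecAt {X : Type*} [PseudoMetricSpace X] (f : X → X) (g : ℕ → ℝ → ℕ)
    (ε : ℝ) : Prop :=
  ∃ N : ℕ, 0 < N ∧ ∀ x y : X, ∀ n m : ℕ, N ≤ n → N ≤ m →
    (mistakeBall f g m y ε ∩ f^[m] ⁻¹' mistakeBall f g n x ε).Nonempty

/-- The `g`-almost specification property. -/
def AlmostSpec {X : Type*} [PseudoMetricSpace X] (f : X → X) (g : ℕ → ℝ → ℕ) : Prop :=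
  ∃ ε : ℝ, 0 < ε ∧ AlmostSpecAt f g ε

/-- Static entropy `H_μ(Q^{(n)})` of the refined partition `Q^{(n)} = ⋁_{i<n} f⁻ⁱQ`,
where the finite partition `Q` is encoded by a map `P : X → Fin m`. -/
noncomputable def refinedEntropy {X : Type*} [MeasurableSpace X] (μ : Measure X)
    (f : X → X) {m : ℕ} (P : X → Fin m) (n : ℕ) : ℝ :=
  ∑ a : Fin n → Fin m, Real.negMulLog (μ {x | ∀ i : Fin n, P (f^[(i : ℕ)] x) = a i}).toReal

/-- The measure-theoretic entropy `h_μ(f, Q)` of `μ` relative to the finite partition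
encoded by `P : X → Fin m`, defined (via subadditivity) as `inf_n H_μ(Q^{(n)})/n`. -/
noncomputable def partitionEntropy {X : Type*} [MeasurableSpace X] (μ : Measure X)
    (f : X → X) {m : ℕ} (P : X → Fin m) : ℝ :=
  ⨅ n : ℕ, refinedEntropy μ f P (n + 1) / (n + 1)

/-- The Kolmogorov–Sinai entropy `h_μ(f)`: the supremum, over all finite measurable
partitions, of the entropy relative to the partition. -/
noncomputable def ksEntropy {X : Type*} [MeasurableSpace X] (μ : Measure X)
    (f : X → X) : ℝ≥0∞ :=
  ⨆ (m : ℕ) (P : X → Fin m) (_ : Measurable P), ENNReal.ofReal (partitionEntropy μ f P)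

/-- `N_μ(n,c)`: the minimum number of elements of the refined partition
`Q^{(n)} = ⋁_{i<n} f⁻ⁱQ` needed to cover a set of `μ`-measure at least `c`. -/
noncomputable def coverNumber {X : Type*} [MeasurableSpace X] (μ : Measure X)
    (f : X → X) {m : ℕ} (P : X → Fin m) (n : ℕ) (c : ℝ) : ℕ :=
  sInf {k : ℕ | ∃ S : Finset (Fin n → Fin m), S.card = k ∧
    c ≤ (μ (⋃ a ∈ S, {x | ∀ i : Fin n, P (f^[(i : ℕ)] x) = a i})).toReal}

/-!
Write `H_n` for the entropy of `Q^{(n)}` and `h` for its rate `inf_n H_n / n`.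

Upper bound. For `b > h` some increment `H_{k+1} - H_k` is below `b`, since otherwise
`H_n ≥ n * b` for every `n`. This increment is the integral of the conditional information `F` of a
letter given the `k` preceding ones, so by the mean ergodic theorem the Birkhoff sum of `F` is at
most `n * b` on a set of measure tending to `1`. On that set the word of length `k + n` has
probability at least `exp (-n * b)` given its first `k` letters, under the Markov chain of order `k`
with the same transition probabilities, and there are at most `m ^ k * exp (n * b)` such words.

Lower bound. For `a < h` suppose that a set `S` of at most `exp (n * a)` words has measure at
least `c`. By the upper bound, at most `exp (n * (h + δ))` words form a set `B` of measure at least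
`1 - δ`. Gibbs' inequality for code lengths `n * a` on `S`, `n * (h + δ)` on the rest of `B` and
`n * log m` elsewhere bounds `n * h ≤ H_n` by `log 3 + n * (h - (h - a) * c) + O(n * δ)`, which is
absurd for small `δ` and large `n`.
-/

section MeanErgodic

variable {𝕜 E X : Type*} [RCLike 𝕜] [NormedAddCommGroup E] [InnerProductSpace 𝕜 E]
  [MeasurableSpace X] {μ : Measure X} {f : X → X} {F : X → E}

theorem birkhoffAverage_compMeasurePreserving_toLp_ae_eq (hf : MeasurePreserving f μ μ)
    (hF : MemLp F 2 μ) (n : ℕ) :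
    (birkhoffAverage 𝕜 (Lp.compMeasurePreserving f hf) id n (hF.toLp F) : Lp E 2 μ) =ᵐ[μ]
      birkhoffAverage 𝕜 f F n := by
  have iterate_toLp_ae_eq (i : ℕ) :
      ((Lp.compMeasurePreserving f hf)^[i] (hF.toLp F) : Lp E 2 μ) =ᵐ[μ] F ∘ f^[i] := by
    rw [Lp.compMeasurePreserving_iterate, Lp.toLp_compMeasurePreserving hF]
    exact MemLp.coeFn_toLp _
  have sum_ae_eq : (birkhoffSum (Lp.compMeasurePreserving f hf) id n (hF.toLp F) : Lp E 2 μ)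
      =ᵐ[μ] ∑ i ∈ Finset.range n, F ∘ f^[i] :=
    (Lp.coeFn_finsetSum _ _).trans (eventuallyEq_sum fun i _ => iterate_toLp_ae_eq i)
  refine (Lp.coeFn_smul _ _).trans ?_
  filter_upwards [sum_ae_eq] with x hx
  rw [Pi.smul_apply, hx, Finset.sum_apply]
  rfl

variable [CompleteSpace E] [NormedSpace ℝ E]

theorem inner_Lp_const_eq_inner_integral [IsFiniteMeasure μ] (e : E) (u : Lp E 2 μ) :
    inner 𝕜 (Lp.const 2 μ e) u = inner 𝕜 e (∫ x, u x ∂μ) := by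
  rw [← indicatorConstLp_univ, L2.inner_indicatorConstLp_eq_inner_setIntegral, setIntegral_univ]

variable (𝕜) in
/-- The mean ergodic theorem identifies the limit as the projection of `F` onto the invariant
vectors, which ergodicity forces to be constant. -/
theorem tendstoInMeasure_birkhoffAverage_of_ergodic [IsProbabilityMeasure μ] (hf : Ergodic f μ)
    (hF : MemLp F 2 μ) :
    TendstoInMeasure μ (birkhoffAverage 𝕜 f F) atTop fun _ => ∫ x, F x ∂μ := by
  have hmp := hf.toMeasurePreserving
  let U : Lp E 2 μ →L[𝕜] Lp E 2 μ := (Lp.compMeasurePreservingₗᵢ 𝕜 f hmp).toContinuousLinearMap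
  let K := U.eqLocus (1 : Lp E 2 μ →L[𝕜] Lp E 2 μ)
  let g : Lp E 2 μ := K.orthogonalProjectionOnto (hF.toLp F)
  have tendsto_g : Tendsto (fun n => birkhoffAverage 𝕜 U id n (hF.toLp F)) atTop (𝓝 g) :=
    U.tendsto_birkhoffAverage_orthogonalProjection
      (LinearIsometry.norm_toContinuousLinearMap_le _) _
  have g_comp_ae_eq : g ∘ f =ᵐ[μ] g := by
    have U_g : U g = g := (K.orthogonalProjectionOnto (hF.toLp F)).2
    nth_rw 2 [← U_g]
    exact (Lp.coeFn_compMeasurePreserving g hmp).symm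
  obtain ⟨a, g_ae_eq⟩ := hf.ae_eq_const_of_ae_eq_comp_ae (Lp.aestronglyMeasurable g) g_comp_ae_eq
  have const_mem (e : E) : Lp.const 2 μ e ∈ K :=
    show U (Lp.const 2 μ e) = Lp.const 2 μ e from
      Lp.toLp_compMeasurePreserving (memLp_const e) hmp
  have a_eq : a = ∫ x, F x ∂μ := by
    refine ext_inner_left 𝕜 fun e => ?_
    have inner_g : inner 𝕜 (Lp.const 2 μ e) g = inner 𝕜 (Lp.const 2 μ e) (hF.toLp F) :=
      K.inner_orthogonalProjectionOnto_eq_of_mem_left ⟨_, const_mem e⟩ (hF.toLp F)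
    rw [inner_Lp_const_eq_inner_integral, inner_Lp_const_eq_inner_integral,
      integral_congr_ae g_ae_eq, integral_congr_ae hF.coeFn_toLp] at inner_g
    simpa using inner_g
  exact (tendstoInMeasure_of_tendsto_Lp tendsto_g).congr
    (birkhoffAverage_compMeasurePreserving_toLp_ae_eq hmp hF) (by rwa [← a_eq])

end MeanErgodic

section MeasureBirkhoffSum

variable {X : Type*} [MeasurableSpace X] {μ : Measure X} {f : X → X}
  [IsProbabilityMeasure μ]

theorem tendsto_measureReal_birkhoffSum_le {F : X → ℝ} (hf : Ergodic f μ) (hF : MemLp F 2 μ)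
    {b : ℝ} (hb : ∫ x, F x ∂μ < b) :
    Tendsto (fun n : ℕ => μ.real {x | birkhoffSum f F n x ≤ n * b}) atTop (𝓝 1) := by
  have tendsto_average : TendstoInMeasure μ (birkhoffAverage ℝ f F) atTop fun _ => ∫ x, F x ∂μ :=
    tendstoInMeasure_birkhoffAverage_of_ergodic (E := ℝ) ℝ hf hF
  have tendsto_bad := tendstoInMeasure_iff_measureReal_norm.1 tendsto_average _ (sub_pos.2 hb)
  have tendsto_one_sub_bad := tendsto_bad.const_sub 1
  rw [sub_zero] at tendsto_one_sub_bad
  refine tendsto_of_tendsto_of_tendsto_of_le_of_le' tendsto_one_sub_bad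
    tendsto_const_nhds ?_ (.of_forall fun _ => measureReal_le_one)
  filter_upwards [eventually_gt_atTop 0] with n hn
  rw [sub_le_iff_le_add, ← probReal_univ (μ := μ)]
  refine (measureReal_mono fun x _ => ?_).trans (measureReal_union_le _ _)
  refine or_iff_not_imp_right.2 fun hx => ?_
  have average_lt : birkhoffAverage ℝ f F n x < b := by
    have deviation_lt : |birkhoffAverage ℝ f F n x - ∫ x, F x ∂μ| < b - ∫ x, F x ∂μ := not_le.1 hx
    linarith [(abs_lt.1 deviation_lt).2]
  exact (inv_mul_le_iff₀ (by positivity)).1 average_lt.le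

end MeasureBirkhoffSum

section Gibbs

open Real

variable {A : Type*} [Fintype A] {p : A → ℝ}

theorem negMulLog_add_mul_log_le {x y : ℝ} (hx : 0 ≤ x) (hy : 0 < y) :
    negMulLog x + x * log y ≤ y - x := by
  rcases hx.eq_or_lt with rfl | hx
  · simpa using hy.le
  calc negMulLog x + x * log y = x * log (y / x) := by
        rw [negMulLog, log_div hy.ne' hx.ne']; ring
    _ ≤ x * (y / x - 1) := by gcongr; exact log_le_sub_one_of_pos (div_pos hy hx)
    _ = y - x := by field_simp

theorem sum_negMulLog_le_sum_mul_add_log_sum_exp (hp0 : ∀ a, 0 ≤ p a) (hp1 : ∑ a, p a = 1)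
    (u : A → ℝ) :
    ∑ a, negMulLog (p a) ≤ ∑ a, p a * u a + log (∑ a, exp (-u a)) := by
  have : Nonempty A := not_isEmpty_iff.1 fun _ => by simp at hp1
  set Z := ∑ a, exp (-u a) with hZ
  have Z_pos : 0 < Z := by positivity
  have pointwise (a : A) :
      negMulLog (p a) - p a * u a - p a * log Z ≤ exp (-u a) / Z - p a := by
    have := negMulLog_add_mul_log_le (hp0 a) (div_pos (exp_pos (-u a)) Z_pos)
    rw [log_div (exp_pos _).ne' Z_pos.ne', log_exp] at this
    linarith
  have := Finset.sum_le_sum fun a (_ : a ∈ Finset.univ) => pointwise a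
  simp only [Finset.sum_sub_distrib, ← Finset.sum_mul, ← Finset.sum_div, hp1, ← hZ,
    div_self Z_pos.ne'] at this
  linarith

theorem sum_negMulLog_le_of_card_le_exp (hp0 : ∀ a, 0 ≤ p a) (hp1 : ∑ a, p a = 1)
    {S B : Finset A} {α β : ℝ} (hS : S.card ≤ exp α) (hB : B.card ≤ exp β) (hβ : 0 ≤ β) :
    ∑ a, negMulLog (p a) ≤ log 3 + β + log (Fintype.card A) * (1 - ∑ a ∈ B, p a)
      - (β - α) * ∑ a ∈ S, p a := by
  classical
  have : Nonempty A := not_isEmpty_iff.1 fun _ => by simp at hp1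
  set γ := log (Fintype.card A) with hγ
  have γ_nonneg : 0 ≤ γ := log_natCast_nonneg _
  have card_eq : exp γ = Fintype.card A := exp_log (by positivity)
  let u : A → ℝ := fun a => if a ∈ S then α else if a ∈ B then β else γ
  have sum_exp_le : ∑ a, exp (-u a) ≤ 3 := by
    have card_mul_le {k : ℕ} {t : ℝ} (h : k ≤ exp t) : k * exp (-t) ≤ 1 := by
      rw [exp_neg, ← div_eq_mul_inv]
      exact div_le_one_of_le₀ h (exp_pos t).le
    calc ∑ a, exp (-u a)
        ≤ ∑ a, ((if a ∈ S then exp (-α) else 0) + (if a ∈ B then exp (-β) else 0) + exp (-γ)) := by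
          gcongr with a
          have := exp_pos (-α)
          have := exp_pos (-β)
          have := exp_pos (-γ)
          simp only [u]
          split_ifs <;> linarith
      _ = S.card * exp (-α) + B.card * exp (-β) + Fintype.card A * exp (-γ) := by
          simp [Finset.sum_add_distrib]
      _ ≤ 3 := by linarith [card_mul_le hS, card_mul_le hB, card_mul_le card_eq.ge]
  have sum_mul_le : ∑ a, p a * u a ≤ β + γ * (1 - ∑ a ∈ B, p a) - (β - α) * ∑ a ∈ S, p a := by
    calc ∑ a, p a * u a
        ≤ ∑ a, (β * p a + γ * (p a - if a ∈ B then p a else 0)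
            - (β - α) * if a ∈ S then p a else 0) := by
          gcongr with a
          have := mul_nonneg hβ (hp0 a)
          have := mul_nonneg γ_nonneg (hp0 a)
          simp only [u]
          split_ifs <;> linarith
      _ = β + γ * (1 - ∑ a ∈ B, p a) - (β - α) * ∑ a ∈ S, p a := by
          simp only [Finset.sum_sub_distrib, Finset.sum_add_distrib, ← Finset.mul_sum, hp1,
            mul_one, Finset.sum_ite_mem, Finset.univ_inter]
  linarith [sum_negMulLog_le_sum_mul_add_log_sum_exp hp0 hp1 u,
    log_le_log (by positivity) sum_exp_le]

end Gibbs

section Windows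

open Real

variable {A : Type*} {k n : ℕ}

/-- The block of `k + 1` letters of the word `w` that starts at position `i`. -/
def window (w : Fin (k + n) → A) (i : Fin n) : Fin (k + 1) → A :=
  fun j => w ⟨i + j, by omega⟩

theorem window_snoc_castSucc (w : Fin (k + n) → A) (a : A) (i : Fin n) :
    window (n := n + 1) (Fin.snoc w a : Fin (k + n + 1) → A) i.castSucc = window w i := by
  funext j
  have : (i + j : ℕ) < k + n := by omega
  simp [window, Fin.snoc, this]

theorem window_snoc_last (w : Fin (k + n) → A) (a : A) :
    window (n := n + 1) (Fin.snoc w a : Fin (k + n + 1) → A) (Fin.last n) =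
      Fin.snoc (fun j : Fin k => w ⟨n + j, by omega⟩) a := by
  funext j
  cases j using Fin.lastCases with
  | last => simp [window, Fin.snoc, add_comm n k]
  | cast j => simp [window, Fin.snoc, add_comm n]

variable [Fintype A] {q : (Fin (k + 1) → A) → ℝ}

theorem sum_prod_window_le (hq0 : ∀ w, 0 ≤ q w) (hq1 : ∀ b, ∑ a, q (Fin.snoc b a) ≤ 1) (n : ℕ) :
    ∑ w : Fin (k + n) → A, ∏ i : Fin n, q (window w i) ≤ (Fintype.card A : ℝ) ^ k := by
  induction n with
  | zero => simp
  | succ n ih =>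
    calc ∑ w : Fin (k + n + 1) → A, ∏ i : Fin (n + 1), q (window (n := n + 1) w i)
        = ∑ w : Fin (k + n) → A, (∏ i : Fin n, q (window w i)) *
            ∑ a, q (Fin.snoc (fun j : Fin k => w ⟨n + j, by omega⟩) a) := by
          rw [← (Fin.snocEquiv fun _ => A).sum_comp, Fintype.sum_prod_type_right]
          simp_rw [Finset.mul_sum]
          refine Finset.sum_congr rfl fun w _ => Finset.sum_congr rfl fun a _ => ?_
          change ∏ i, q (window (n := n + 1) (Fin.snoc w a : Fin (k + n + 1) → A) i) = _
          simp only [Fin.prod_univ_castSucc, window_snoc_castSucc, window_snoc_last]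
      _ ≤ ∑ w : Fin (k + n) → A, ∏ i : Fin n, q (window w i) :=
          Finset.sum_le_sum fun w _ =>
            mul_le_of_le_one_right (Finset.prod_nonneg fun i _ => hq0 _) (hq1 _)
      _ ≤ (Fintype.card A : ℝ) ^ k := ih

/-- The words of length `k + n` on which the product of the weights `q` of the `n` windows is at
least `exp (-L)`. When `q` gives the transition probabilities of a Markov chain of order `k`,
these are the words that are not too unlikely given their first `k` letters. -/
noncomputable def likelyWords (q : (Fin (k + 1) → A) → ℝ) (n : ℕ) (L : ℝ) :
    Finset (Fin (k + n) → A) :=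
  {w | exp (-L) ≤ ∏ i : Fin n, q (window w i)}

theorem card_likelyWords_le (hq0 : ∀ w, 0 ≤ q w) (hq1 : ∀ b, ∑ a, q (Fin.snoc b a) ≤ 1) (n : ℕ)
    (L : ℝ) : (likelyWords q n L).card ≤ (Fintype.card A : ℝ) ^ k * exp L := by
  have card_mul_le : (likelyWords q n L).card * exp (-L) ≤ (Fintype.card A : ℝ) ^ k := by
    calc (likelyWords q n L).card * exp (-L)
        = ∑ _w ∈ likelyWords q n L, exp (-L) := by simp
      _ ≤ ∑ w ∈ likelyWords q n L, ∏ i, q (window w i) :=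
          Finset.sum_le_sum fun _ hw => (Finset.mem_filter.1 hw).2
      _ ≤ ∑ w, ∏ i, q (window w i) :=
          Finset.sum_le_univ_sum_of_nonneg fun w => Finset.prod_nonneg fun i _ => hq0 _
      _ ≤ (Fintype.card A : ℝ) ^ k := sum_prod_window_le hq0 hq1 n
  rwa [exp_neg, ← div_eq_mul_inv, div_le_iff₀ (exp_pos L)] at card_mul_le

end Windows

section Itinerary

variable {X A : Type*}

/-- The word of length `n` recording the elements of the partition `P` visited by `x` at the
times `0, …, n - 1`; its fibres are the elements of the refined partition `Q^{(n)}`. -/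
def itinerary (f : X → X) (P : X → A) (n : ℕ) (x : X) : Fin n → A :=
  fun i => P (f^[i] x)

theorem window_itinerary (f : X → X) (P : X → A) {k n : ℕ} (x : X) (i : Fin n) :
    window (itinerary f P (k + n) x) i = itinerary f P (k + 1) (f^[i] x) := by
  funext j
  simp only [window, itinerary, ← Function.iterate_add_apply, add_comm]

theorem init_itinerary (f : X → X) (P : X → A) (n : ℕ) (x : X) :
    Fin.init (itinerary f P (n + 1) x) = itinerary f P n x := rfl

theorem setOf_forall_eq_preimage_itinerary (f : X → X) (P : X → A) {n : ℕ} (w : Fin n → A) :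
    {x | ∀ i : Fin n, P (f^[i] x) = w i} = itinerary f P n ⁻¹' {w} := by
  ext x
  simp [itinerary, funext_iff]

variable [MeasurableSpace X] [MeasurableSpace A] {f : X → X} {P : X → A}

theorem measurable_itinerary (hf : Measurable f) (hP : Measurable P) (n : ℕ) :
    Measurable (itinerary f P n) :=
  measurable_pi_lambda _ fun i => hP.comp (hf.iterate i)

end Itinerary

section WordProb

variable {X A : Type*} [MeasurableSpace X] {f : X → X} {P : X → A} {μ : Measure X}

/-- The probability of the word `w`, i.e. the measure of the element of the refined partition
`Q^{(n)}` with itinerary `w`. -/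
noncomputable def wordProb (μ : Measure X) (f : X → X) (P : X → A) (n : ℕ) (w : Fin n → A) : ℝ :=
  μ.real (itinerary f P n ⁻¹' {w})

/-- The conditional probability of the last letter of `w` given the `k` preceding ones, with the
value `0` when the latter have probability `0`. -/
noncomputable def condWordProb (μ : Measure X) (f : X → X) (P : X → A) (k : ℕ)
    (w : Fin (k + 1) → A) : ℝ :=
  wordProb μ f P (k + 1) w / wordProb μ f P k (Fin.init w)

/-- The conditional information of the letter at time `k` given those at times `0, …, k - 1`. -/
noncomputable def condInfo (μ : Measure X) (f : X → X) (P : X → A) (k : ℕ) (x : X) : ℝ :=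
  -Real.log (condWordProb μ f P k (itinerary f P (k + 1) x))

theorem wordProb_nonneg (n : ℕ) (w : Fin n → A) : 0 ≤ wordProb μ f P n w :=
  measureReal_nonneg

theorem condWordProb_nonneg (k : ℕ) (w : Fin (k + 1) → A) : 0 ≤ condWordProb μ f P k w :=
  div_nonneg (wordProb_nonneg _ _) (wordProb_nonneg _ _)

theorem ae_wordProb_itinerary_pos [IsFiniteMeasure μ] [Countable A] (n : ℕ) :
    ∀ᵐ x ∂μ, 0 < wordProb μ f P n (itinerary f P n x) := by
  have ae_forall_word : ∀ᵐ x ∂μ, ∀ w, itinerary f P n x = w → 0 < wordProb μ f P n w := by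
    refine ae_all_iff.2 fun w => ?_
    by_cases hw : μ (itinerary f P n ⁻¹' {w}) = 0
    · filter_upwards [measure_eq_zero_iff_ae_notMem.1 hw] with x hx hxw using absurd hxw hx
    · exact ae_of_all _ fun _ _ => ENNReal.toReal_pos hw (measure_ne_top _ _)
  filter_upwards [ae_forall_word] with x hx using hx _ rfl

theorem ae_condWordProb_itinerary_pos [IsFiniteMeasure μ] [Countable A] (k : ℕ) :
    ∀ᵐ x ∂μ, 0 < condWordProb μ f P k (itinerary f P (k + 1) x) := by
  filter_upwards [ae_wordProb_itinerary_pos (f := f) (P := P) (k + 1),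
    ae_wordProb_itinerary_pos (f := f) (P := P) k] with x hx hx' using div_pos hx hx'

theorem ae_exp_neg_birkhoffSum_condInfo_eq [IsFiniteMeasure μ] [Countable A]
    (hf : MeasurePreserving f μ μ) (k n : ℕ) :
    ∀ᵐ x ∂μ, Real.exp (-birkhoffSum f (condInfo μ f P k) n x) =
      ∏ i : Fin n, condWordProb μ f P k (window (itinerary f P (k + n) x) i) := by
  have ae_orbit_pos : ∀ᵐ x ∂μ, ∀ i : ℕ,
      0 < condWordProb μ f P k (itinerary f P (k + 1) (f^[i] x)) :=
    ae_all_iff.2 fun i =>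
      (hf.iterate i).quasiMeasurePreserving.ae (ae_condWordProb_itinerary_pos k)
  filter_upwards [ae_orbit_pos] with x hx
  simp_rw [window_itinerary]
  rw [Fin.prod_univ_eq_prod_range
    (fun i => condWordProb μ f P k (itinerary f P (k + 1) (f^[i] x))), birkhoffSum,
    ← Finset.sum_neg_distrib, Real.exp_sum]
  refine Finset.prod_congr rfl fun i _ => ?_
  rw [condInfo, neg_neg, Real.exp_log (hx i)]

theorem wordProb_le_wordProb_init [IsFiniteMeasure μ] {k : ℕ} (w : Fin (k + 1) → A) :
    wordProb μ f P (k + 1) w ≤ wordProb μ f P k (Fin.init w) :=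
  measureReal_mono fun _ hx => congrArg Fin.init hx

variable [MeasurableSpace A] [MeasurableSingletonClass A]

theorem sum_wordProb [IsFiniteMeasure μ] (hf : Measurable f) (hP : Measurable P) {n : ℕ}
    (S : Finset (Fin n → A)) :
    ∑ w ∈ S, wordProb μ f P n w = μ.real (itinerary f P n ⁻¹' S) :=
  sum_measureReal_preimage_singleton S fun w _ =>
    measurable_itinerary hf hP n (measurableSet_singleton w)

theorem memLp_condInfo [IsFiniteMeasure μ] [Finite A] (hf : Measurable f)
    (hP : Measurable P) (k : ℕ) (r : ℝ≥0∞) : MemLp (condInfo μ f P k) r μ :=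
  MemLp.comp_of_map (f := itinerary f P (k + 1)) (g := fun w => -Real.log (condWordProb μ f P k w))
    .of_discrete (measurable_itinerary hf hP _).aemeasurable

variable [Fintype A]

theorem sum_univ_wordProb [IsProbabilityMeasure μ] (hf : Measurable f) (hP : Measurable P)
    (n : ℕ) : ∑ w, wordProb μ f P n w = 1 := by
  simp [sum_wordProb hf hP]

theorem sum_wordProb_snoc [IsFiniteMeasure μ] (hf : Measurable f) (hP : Measurable P) {k : ℕ}
    (b : Fin k → A) :
    ∑ a, wordProb μ f P (k + 1) (Fin.snoc b a) = wordProb μ f P k b := by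
  classical
  have snoc_injective : Function.Injective fun a => (Fin.snoc b a : Fin (k + 1) → A) :=
    fun a a' h => by simpa using congrFun h (Fin.last k)
  rw [← Finset.sum_image snoc_injective.injOn, sum_wordProb hf hP, wordProb]
  congr 1
  ext x
  simp only [Finset.coe_image, Finset.coe_univ, image_univ, mem_preimage, mem_range,
    mem_singleton_iff]
  constructor
  · rintro ⟨a, ha⟩
    rw [← init_itinerary, ← ha, Fin.init_snoc]
  · rintro rfl
    exact ⟨_, Fin.snoc_init_self (itinerary f P (k + 1) x)⟩

theorem sum_condWordProb_snoc_le_one [IsFiniteMeasure μ] (hf : Measurable f) (hP : Measurable P)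
    {k : ℕ} (b : Fin k → A) : ∑ a, condWordProb μ f P k (Fin.snoc b a) ≤ 1 := by
  simp only [condWordProb, Fin.init_snoc, ← Finset.sum_div, sum_wordProb_snoc hf hP]
  exact div_self_le_one _

theorem integral_comp_itinerary [IsFiniteMeasure μ] (hf : Measurable f) (hP : Measurable P)
    {n : ℕ} (φ : (Fin n → A) → ℝ) :
    ∫ x, φ (itinerary f P n x) ∂μ = ∑ w, wordProb μ f P n w * φ w := by
  have hI := measurable_itinerary hf hP n
  rw [← integral_map hI.aemeasurable (measurable_of_finite φ).aestronglyMeasurable,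
    integral_fintype .of_finite]
  simp [wordProb, map_measureReal_apply hI]

theorem integral_condInfo [IsFiniteMeasure μ] (hf : Measurable f) (hP : Measurable P) (k : ℕ) :
    ∫ x, condInfo μ f P k x ∂μ = ∑ w, Real.negMulLog (wordProb μ f P (k + 1) w)
      - ∑ w, Real.negMulLog (wordProb μ f P k w) := by
  have term_eq (w : Fin (k + 1) → A) :
      wordProb μ f P (k + 1) w * -Real.log (condWordProb μ f P k w) =
        Real.negMulLog (wordProb μ f P (k + 1) w) +
          wordProb μ f P (k + 1) w * Real.log (wordProb μ f P k (Fin.init w)) := by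
    rcases (wordProb_nonneg (μ := μ) (f := f) (P := P) _ w).eq_or_lt with hw | hw
    · simp [← hw]
    · rw [condWordProb, Real.log_div hw.ne' (hw.trans_le (wordProb_le_wordProb_init w)).ne',
        Real.negMulLog]
      ring
  have sum_eq : ∑ w : Fin (k + 1) → A,
      wordProb μ f P (k + 1) w * Real.log (wordProb μ f P k (Fin.init w)) =
        -∑ b, Real.negMulLog (wordProb μ f P k b) := by
    rw [← (Fin.snocEquiv fun _ => A).sum_comp, Fintype.sum_prod_type_right,
      ← Finset.sum_neg_distrib]
    refine Finset.sum_congr rfl fun b _ => ?_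
    simp only [Fin.snocEquiv, Equiv.coe_fn_mk, Fin.init_snoc, ← Finset.sum_mul]
    rw [sum_wordProb_snoc hf hP, Real.negMulLog, neg_mul, neg_neg]
  unfold condInfo
  rw [integral_comp_itinerary hf hP fun w => -Real.log (condWordProb μ f P k w)]
  simp only [term_eq, Finset.sum_add_distrib, sum_eq, sub_eq_add_neg]

theorem tendsto_measureReal_preimage_likelyWords [IsProbabilityMeasure μ] (hμ : Ergodic f μ)
    (hP : Measurable P) {k : ℕ} {b : ℝ} (hb : ∫ x, condInfo μ f P k x ∂μ < b) :
    Tendsto (fun n : ℕ =>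
        μ.real (itinerary f P (k + n) ⁻¹' likelyWords (condWordProb μ f P k) n (n * b)))
      atTop (𝓝 1) := by
  refine tendsto_of_tendsto_of_tendsto_of_le_of_le
    (tendsto_measureReal_birkhoffSum_le hμ (memLp_condInfo hμ.measurable hP k 2) hb)
    tendsto_const_nhds (fun n => ENNReal.toReal_mono (measure_ne_top _ _) (measure_mono_ae ?_))
    fun _ => measureReal_le_one
  filter_upwards [ae_exp_neg_birkhoffSum_condInfo_eq (P := P) hμ.toMeasurePreserving k n]
    with x exp_eq hx
  refine Finset.mem_coe.2 (Finset.mem_filter.2 ⟨Finset.mem_univ _, ?_⟩)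
  rw [← exp_eq]
  exact Real.exp_le_exp.2 (neg_le_neg hx)

end WordProb

section PartitionEntropy

variable {X : Type*} [MeasurableSpace X] {μ : Measure X} {f : X → X} {m : ℕ} {P : X → Fin m}

theorem refinedEntropy_eq_sum_negMulLog_wordProb (n : ℕ) :
    refinedEntropy μ f P n = ∑ w, Real.negMulLog (wordProb μ f P n w) := by
  simp only [refinedEntropy, setOf_forall_eq_preimage_itinerary, wordProb, measureReal_def]

variable [IsProbabilityMeasure μ]

theorem refinedEntropy_zero : refinedEntropy μ f P 0 = 0 := by
  simp [refinedEntropy]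

theorem refinedEntropy_nonneg (n : ℕ) : 0 ≤ refinedEntropy μ f P n :=
  Finset.sum_nonneg fun _ _ => Real.negMulLog_nonneg measureReal_nonneg measureReal_le_one

theorem partitionEntropy_nonneg : 0 ≤ partitionEntropy μ f P :=
  Real.iInf_nonneg fun n => div_nonneg (refinedEntropy_nonneg (n + 1)) (by positivity)

theorem mul_partitionEntropy_le_refinedEntropy (n : ℕ) :
    n * partitionEntropy μ f P ≤ refinedEntropy μ f P n := by
  cases n with
  | zero => simp [refinedEntropy_zero]
  | succ n =>
    have bddBelow : BddBelow (range fun n : ℕ => refinedEntropy μ f P (n + 1) / (n + 1)) :=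
      ⟨0, forall_mem_range.2 fun n => div_nonneg (refinedEntropy_nonneg (n + 1)) (by positivity)⟩
    rw [← le_div_iff₀' (by positivity)]
    push_cast
    exact ciInf_le bddBelow n

theorem exists_refinedEntropy_succ_sub_lt {b : ℝ} (hb : partitionEntropy μ f P < b) :
    ∃ k, refinedEntropy μ f P (k + 1) - refinedEntropy μ f P k < b := by
  by_contra! le_increment
  have mul_le_refinedEntropy (n : ℕ) : n * b ≤ refinedEntropy μ f P n := by
    induction n with
    | zero => simp [refinedEntropy_zero]
    | succ n ih => push_cast; linarith [le_increment n]
  refine hb.not_ge (le_ciInf fun n => ?_)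
  rw [le_div_iff₀' (by positivity)]
  exact_mod_cast mul_le_refinedEntropy (n + 1)

end PartitionEntropy

section CoverNumber

open Real

variable {X : Type*} [MeasurableSpace X] {μ : Measure X} {f : X → X} {m : ℕ} {P : X → Fin m}
  {a b c : ℝ}

theorem coverNumber_eq_sInf (n : ℕ) :
    coverNumber μ f P n c = sInf {k | ∃ S : Finset (Fin n → Fin m), S.card = k ∧
      c ≤ μ.real (itinerary f P n ⁻¹' S)} := by
  simp only [coverNumber, setOf_forall_eq_preimage_itinerary, ← Finset.mem_coe,
    biUnion_preimage_singleton, measureReal_def]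

theorem coverNumber_le_card {n : ℕ} {S : Finset (Fin n → Fin m)}
    (hS : c ≤ μ.real (itinerary f P n ⁻¹' S)) : coverNumber μ f P n c ≤ S.card := by
  rw [coverNumber_eq_sInf]
  exact Nat.sInf_le ⟨S, rfl, hS⟩

variable [IsProbabilityMeasure μ]

theorem exists_card_eq_coverNumber (hc : c ≤ 1) (n : ℕ) :
    ∃ S : Finset (Fin n → Fin m), S.card = coverNumber μ f P n c ∧
      c ≤ μ.real (itinerary f P n ⁻¹' S) := by
  rw [coverNumber_eq_sInf]
  exact Nat.sInf_mem (s := {k | ∃ S : Finset (Fin n → Fin m), S.card = k ∧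
    c ≤ μ.real (itinerary f P n ⁻¹' S)}) ⟨_, Finset.univ, rfl, by simpa using hc⟩

theorem eventually_exists_card_le_exp (hμ : Ergodic f μ) (hP : Measurable P)
    (hb : partitionEntropy μ f P < b) (hc : c < 1) :
    ∀ᶠ n : ℕ in atTop, ∃ B : Finset (Fin n → Fin m), B.card ≤ exp (n * b) ∧
      c ≤ μ.real (itinerary f P n ⁻¹' B) := by
  have b_nonneg : 0 ≤ b := partitionEntropy_nonneg.trans hb.le
  obtain ⟨b', hb', b'_lt⟩ := exists_between hb
  obtain ⟨k, hk⟩ := exists_refinedEntropy_succ_sub_lt hb'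
  rw [refinedEntropy_eq_sum_negMulLog_wordProb, refinedEntropy_eq_sum_negMulLog_wordProb,
    ← integral_condInfo hμ.measurable hP] at hk
  have pow_le_exp : ∀ᶠ n : ℕ in atTop, (m : ℝ) ^ k ≤ exp (n * (b - b')) :=
    (tendsto_exp_atTop.comp (tendsto_natCast_atTop_atTop.atTop_mul_const
      (sub_pos.2 b'_lt))).eventually_ge_atTop _
  have map_eq : map (k + ·) atTop = (atTop : Filter ℕ) := by
    simpa only [add_comm k] using map_add_atTop_eq_nat k
  rw [← map_eq, eventually_map]
  filter_upwards [pow_le_exp,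
    (tendsto_measureReal_preimage_likelyWords hμ hP hk).eventually_const_le hc] with n hn hcn
  refine ⟨_, ?_, hcn⟩
  calc ((likelyWords (condWordProb μ f P k) n (n * b')).card : ℝ)
      ≤ (m : ℝ) ^ k * exp (n * b') := by
        simpa using card_likelyWords_le (condWordProb_nonneg k)
          (sum_condWordProb_snoc_le_one hμ.measurable hP) n (n * b')
    _ ≤ exp (n * (b - b')) * exp (n * b') := by gcongr
    _ = exp (n * b) := by rw [← exp_add]; ring_nf
    _ ≤ exp ((k + n : ℕ) * b) := by gcongr; exact Nat.le_add_left n k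

theorem eventually_coverNumber_le_exp (hμ : Ergodic f μ) (hP : Measurable P)
    (hb : partitionEntropy μ f P < b) (hc : c < 1) :
    ∀ᶠ n : ℕ in atTop, coverNumber μ f P n c ≤ exp (n * b) := by
  filter_upwards [eventually_exists_card_le_exp hμ hP hb hc] with n ⟨B, card_le, hB⟩
  exact (Nat.cast_le.2 (coverNumber_le_card hB)).trans card_le

theorem mul_partitionEntropy_le_of_card_le_exp (hf : Measurable f) (hP : Measurable P) {n : ℕ}
    {S B : Finset (Fin n → Fin m)} (hS : S.card ≤ exp (n * a)) (hB : B.card ≤ exp (n * b))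
    (hb : 0 ≤ b) :
    n * partitionEntropy μ f P ≤ log 3 + n * b
      + n * log m * (1 - μ.real (itinerary f P n ⁻¹' B))
      - n * (b - a) * μ.real (itinerary f P n ⁻¹' S) := by
  have gibbs := sum_negMulLog_le_of_card_le_exp (wordProb_nonneg (μ := μ) (f := f) (P := P) n)
    (sum_univ_wordProb hf hP n) hS hB (by positivity)
  rw [← refinedEntropy_eq_sum_negMulLog_wordProb, sum_wordProb hf hP, sum_wordProb hf hP,
    Fintype.card_pi_const, Fintype.card_fin, Nat.cast_pow, log_pow, ← mul_sub] at gibbs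
  exact (mul_partitionEntropy_le_refinedEntropy n).trans gibbs

theorem eventually_exp_lt_coverNumber (hμ : Ergodic f μ) (hP : Measurable P)
    (ha : a < partitionEntropy μ f P) (hc0 : 0 < c) (hc1 : c ≤ 1) :
    ∀ᶠ n : ℕ in atTop, exp (n * a) < coverNumber μ f P n c := by
  set h := partitionEntropy μ f P
  have gap_pos : 0 < h - a := sub_pos.2 ha
  obtain ⟨δ, δ_pos, δ_lt⟩ : ∃ δ > 0, (1 + log m) * δ < (h - a) * c :=
    ⟨(h - a) * c / (2 * (1 + log m)), by positivity, by field_simp; linarith⟩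
  have log_three_lt : ∀ᶠ n : ℕ in atTop, log 3 < n * ((h - a) * c - (1 + log m) * δ) :=
    (tendsto_natCast_atTop_atTop.atTop_mul_const (sub_pos.2 δ_lt)).eventually_gt_atTop _
  filter_upwards [log_three_lt,
    eventually_exists_card_le_exp hμ hP (lt_add_of_pos_right h δ_pos) (sub_lt_self 1 δ_pos)]
    with n hn ⟨B, hB, measure_B⟩
  obtain ⟨S, card_S, measure_S⟩ := exists_card_eq_coverNumber (μ := μ) (f := f) (P := P) hc1 n
  by_contra! cover_le
  have h_nonneg : 0 ≤ h := partitionEntropy_nonneg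
  have mul_h_le : n * h ≤ log 3 + n * (h + δ) + n * log m * δ - n * (h + δ - a) * c := by
    refine (mul_partitionEntropy_le_of_card_le_exp hμ.measurable hP (card_S ▸ cover_le) hB
      (by positivity)).trans ?_
    have : 0 ≤ h + δ - a := by linarith
    gcongr
    linarith
  have : 0 ≤ n * δ * c := mul_nonneg (by positivity) hc0.le
  linarith

theorem partition_entropy_eq_cover_rate_general (hP : Measurable P) (hc : c ∈ Ioo 0 1)
    (hμ : Ergodic f μ) :
    Tendsto (fun n : ℕ => log (coverNumber μ f P n c) / n) atTop (𝓝 (partitionEntropy μ f P)) := by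
  refine tendsto_order.2 ⟨fun a ha => ?_, fun b hb => ?_⟩
  · filter_upwards [eventually_exp_lt_coverNumber hμ hP ha hc.1 hc.2.le, eventually_gt_atTop 0]
      with n lt hn
    rw [lt_div_iff₀' (by positivity)]
    exact (lt_log_iff_exp_lt ((exp_pos _).trans lt)).2 lt
  · obtain ⟨b', hb', b'_lt⟩ := exists_between hb
    filter_upwards [eventually_coverNumber_le_exp hμ hP hb' hc.2,
      eventually_exp_lt_coverNumber hμ hP (sub_one_lt _) hc.1 hc.2.le, eventually_gt_atTop 0]
      with n le lt hn
    refine lt_of_le_of_lt ?_ b'_lt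
    rw [div_le_iff₀' (by positivity)]
    exact (log_le_iff_le_exp ((exp_pos _).trans lt)).2 le

end CoverNumber

/-- **Katok-type entropy formula.** For an ergodic `μ`, a finite measurable partition
`Q` and any `c ∈ (0,1)`: `h_μ(f,Q) = limsup_n (1/n) log N_μ(n,c)`. -/
theorem partition_entropy_eq_cover_rate {X : Type*} [MetricSpace X] [CompactSpace X]
    [MeasurableSpace X] [BorelSpace X] {f : X → X} (hf : Continuous f)
    {m : ℕ} {P : X → Fin m} (hP : Measurable P) {c : ℝ} (hc : c ∈ Set.Ioo (0 : ℝ) 1)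
    {μ : Measure X} [IsProbabilityMeasure μ] (hμ : Ergodic f μ) :
    partitionEntropy μ f P =
      limsup (fun n : ℕ => Real.log (coverNumber μ f P n c) / n) atTop :=
  (partition_entropy_eq_cover_rate_general hP hc hμ).limsup_eq.symm
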